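/- Let E ⊂ ℤ_{>0} be a finite set of strictly positive integers with |E| = L ≥ 1, let b_n ∈ ℂ for n ∈ E, and set P(t) = Σ_{n ∈ E} b_n e^{int}. Then ‖P‖_{L²(S¹)}² ≤ 144 L ‖ρ ∘ P‖_{L²(S¹)}², where the L² norms are taken with respect to the probability Haar measure dσ = dt/(2π) on the circle. -/

import Mathlib

open MeasureTheory

/-- The defect function `ρ(w) = ||1+w| − 1|`. -/
noncomputable def ρ (w : ℂ) : ℝ := |‖1 + w‖ - 1|

/-- Average over the circle with respect to the probability Haar measure `dσ = dt/(2π)`. -/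
noncomputable def circleAvg (f : ℝ → ℝ) : ℝ :=
  (1 / (2 * Real.pi)) * ∫ t in (0 : ℝ)..(2 * Real.pi), f t

lemma aux_exp (k : ℤ) : ∫ t in (0 : ℝ)..(2 * Real.pi), Complex.exp ((k : ℂ) * (t : ℂ) * Complex.I)
    = if k = 0 then ((2 * Real.pi : ℝ) : ℂ) else 0 := by
  split_ifs with h
  · subst h; simp
  · have hc : (k : ℂ) * Complex.I ≠ 0 := by
      simp [h]
    have h1 : ∀ t : ℝ, Complex.exp ((k : ℂ) * (t : ℂ) * Complex.I)
        = Complex.exp (((k : ℂ) * Complex.I) * (t : ℂ)) := by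
      intro t; congr 1; ring
    simp_rw [h1]
    rw [integral_exp_mul_complex hc]
    have h2 : Complex.exp ((k : ℂ) * Complex.I * ((2 * Real.pi : ℝ) : ℂ)) = 1 := by
      rw [Complex.exp_eq_one_iff]
      exact ⟨k, by push_cast; ring⟩
    rw [h2]; simp

noncomputable def trigP (E : Finset ℕ) (b : ℕ → ℂ) (t : ℝ) : ℂ :=
  ∑ n ∈ E, b n * Complex.exp ((n : ℂ) * (t : ℂ) * Complex.I)

lemma trigP_cont (E : Finset ℕ) (b : ℕ → ℂ) : Continuous (trigP E b) := by
  unfold trigP; fun_prop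

lemma trigP_int (E : Finset ℕ) (hE : ∀ n ∈ E, 1 ≤ n) (b : ℕ → ℂ) :
    ∫ t in (0 : ℝ)..(2 * Real.pi), trigP E b t = 0 := by
  unfold trigP
  rw [intervalIntegral.integral_finsetSum
    (fun n _ => Continuous.intervalIntegrable (by fun_prop) _ _)]
  refine Finset.sum_eq_zero fun n hn => ?_
  rw [intervalIntegral.integral_const_mul]
  have := aux_exp (n : ℤ)
  have h1 := hE n hn
  rw [if_neg (by omega)] at this
  push_cast at this
  rw [this, mul_zero]

lemma trigP_sq (E : Finset ℕ) (hE : ∀ n ∈ E, 1 ≤ n) (b : ℕ → ℂ) :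
    ∫ t in (0 : ℝ)..(2 * Real.pi), trigP E b t * trigP E b t = 0 := by
  unfold trigP
  simp_rw [Finset.sum_mul_sum]
  rw [intervalIntegral.integral_finsetSum
    (fun n _ => Continuous.intervalIntegrable (by fun_prop) _ _)]
  refine Finset.sum_eq_zero fun n hn => ?_
  rw [intervalIntegral.integral_finsetSum
    (fun n _ => Continuous.intervalIntegrable (by fun_prop) _ _)]
  refine Finset.sum_eq_zero fun m hm => ?_
  have h0 : ∀ t : ℝ, b n * Complex.exp ((n : ℂ) * (t : ℂ) * Complex.I) *
      (b m * Complex.exp ((m : ℂ) * (t : ℂ) * Complex.I)) =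
      (b n * b m) * Complex.exp ((((n : ℤ) + (m : ℤ) : ℤ) : ℂ) * (t : ℂ) * Complex.I) := by
    intro t
    rw [mul_mul_mul_comm, ← Complex.exp_add]
    congr 2; push_cast; ring
  simp_rw [h0]
  have h1 := hE n hn
  rw [intervalIntegral.integral_const_mul, aux_exp, if_neg (by omega), mul_zero]

lemma trigP_normSq (E : Finset ℕ) (b : ℕ → ℂ) :
    ∫ t in (0 : ℝ)..(2 * Real.pi), ‖trigP E b t‖ ^ 2 = 2 * Real.pi * ∑ n ∈ E, ‖b n‖ ^ 2 := by
  have key : ∫ t in (0 : ℝ)..(2 * Real.pi), trigP E b t * (starRingEnd ℂ) (trigP E b t)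
      = ((2 * Real.pi * ∑ n ∈ E, ‖b n‖ ^ 2 : ℝ) : ℂ) := by
    have hc : ∀ t : ℝ, (starRingEnd ℂ) (trigP E b t) =
        ∑ n ∈ E, (starRingEnd ℂ) (b n) * Complex.exp (-(n : ℂ) * (t : ℂ) * Complex.I) := by
      intro t
      simp only [trigP, map_sum, map_mul, ← Complex.exp_conj, Complex.conj_I, Complex.conj_ofReal,
        map_natCast]
      refine Finset.sum_congr rfl fun n _ => ?_
      congr 2; ring
    simp_rw [hc]
    unfold trigP
    simp_rw [Finset.sum_mul_sum]
    rw [intervalIntegral.integral_finsetSum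
      (fun n _ => Continuous.intervalIntegrable (by fun_prop) _ _)]
    push_cast
    rw [Finset.mul_sum]
    refine Finset.sum_congr rfl fun n hn => ?_
    rw [intervalIntegral.integral_finsetSum
      (fun n _ => Continuous.intervalIntegrable (by fun_prop) _ _)]
    have h0 : ∀ m : ℕ, ∀ t : ℝ, b n * Complex.exp ((n : ℂ) * (t : ℂ) * Complex.I) *
        ((starRingEnd ℂ) (b m) * Complex.exp (-(m : ℂ) * (t : ℂ) * Complex.I)) =
        (b n * (starRingEnd ℂ) (b m)) *
          Complex.exp ((((n : ℤ) - (m : ℤ) : ℤ) : ℂ) * (t : ℂ) * Complex.I) := by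
      intro m t
      rw [mul_mul_mul_comm, ← Complex.exp_add]
      congr 2; push_cast; ring
    simp_rw [h0, intervalIntegral.integral_const_mul, aux_exp]
    rw [Finset.sum_eq_single n]
    · rw [if_pos (by omega), Complex.mul_conj, Complex.normSq_eq_norm_sq]
      push_cast; ring
    · intro m _ hm
      rw [if_neg (by omega), mul_zero]
    · intro h; exact absurd hn h
  have h2 : ∀ t : ℝ, trigP E b t * (starRingEnd ℂ) (trigP E b t)
      = ((‖trigP E b t‖ ^ 2 : ℝ) : ℂ) := by
    intro t
    rw [Complex.mul_conj, Complex.normSq_eq_norm_sq]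
  simp_rw [h2] at key
  rw [intervalIntegral.integral_ofReal] at key
  exact_mod_cast key

lemma re_int (f : ℝ → ℂ) (hf : Continuous f) :
    ∫ t in (0 : ℝ)..(2 * Real.pi), (f t).re = (∫ t in (0 : ℝ)..(2 * Real.pi), f t).re := by
  exact Complex.reCLM.intervalIntegral_comp_comm (hf.intervalIntegrable _ _)

lemma trigP_sup (E : Finset ℕ) (b : ℕ → ℂ) (t : ℝ) :
    ‖trigP E b t‖ ^ 2 ≤ E.card * ∑ n ∈ E, ‖b n‖ ^ 2 := by
  have h1 : ‖trigP E b t‖ ≤ ∑ n ∈ E, ‖b n‖ := by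
    refine (norm_sum_le _ _).trans (Finset.sum_le_sum fun n _ => ?_)
    rw [norm_mul]
    have : ((n : ℂ) * (t : ℂ) * Complex.I) = (((n : ℝ) * t : ℝ) : ℂ) * Complex.I := by push_cast; ring
    rw [this, Complex.norm_exp_ofReal_mul_I, mul_one]
  calc ‖trigP E b t‖ ^ 2 ≤ (∑ n ∈ E, ‖b n‖) ^ 2 := by gcongr
    _ ≤ _ := sq_sum_le_card_mul_sum_sq

lemma norm_one_add_sq (w : ℂ) : ‖1 + w‖ ^ 2 = 1 + 2 * w.re + ‖w‖ ^ 2 := by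
  rw [← Complex.normSq_eq_norm_sq, ← Complex.normSq_eq_norm_sq, Complex.normSq_apply,
    Complex.normSq_apply]
  simp; ring

lemma pt_one (w : ℂ) (a : ℝ) (ha : 0 < a) :
    ‖w‖ ^ 2 ≤ (1 + a) * ρ w ^ 2 + 1 / a - 2 * w.re := by
  have h := norm_one_add_sq w
  unfold ρ
  rw [sq_abs]
  set g := ‖1 + w‖ - 1 with hg
  have h3 : ‖1 + w‖ = g + 1 := by rw [hg]; ring
  rw [h3] at h
  have h4 : 2 * g ≤ a * g ^ 2 + 1 / a := by
    have : a * g ^ 2 + 1 / a - 2 * g = a * (g - 1 / a) ^ 2 := by field_simp; ring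
    have : 0 ≤ a * (g - 1 / a) ^ 2 := by positivity
    linarith
  linarith

lemma pt_two (w : ℂ) (M : ℝ) (hM : ‖w‖ ^ 2 ≤ M) :
    w.re ^ 2 ≤ 2 * ρ w ^ 2 + M / 2 * ‖w‖ ^ 2 := by
  have h := norm_one_add_sq w
  have hre : 1 + w.re ≤ ‖1 + w‖ := by simpa using Complex.re_le_norm (1 + w)
  unfold ρ
  rw [sq_abs]
  set g := ‖1 + w‖ - 1 with hg
  have h3 : ‖1 + w‖ = g + 1 := by rw [hg]; ring
  rw [h3] at h hre
  have h5 : g - w.re ≤ ‖w‖ ^ 2 / 2 := by nlinarith [sq_nonneg g]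
  have h6 : 0 ≤ g - w.re := by linarith
  have h7 : (g - w.re) ^ 2 ≤ (‖w‖ ^ 2 / 2) ^ 2 := by gcongr
  have h8 : (‖w‖ ^ 2) * ‖w‖ ^ 2 ≤ M * ‖w‖ ^ 2 := by gcongr
  nlinarith [sq_nonneg (g + (g - w.re))]

theorem stmt8 (E : Finset ℕ) (hE : ∀ n ∈ E, 1 ≤ n) (hL : 1 ≤ E.card) (b : ℕ → ℂ) :
    circleAvg (fun t => ‖∑ n ∈ E, b n * Complex.exp ((n : ℂ) * (t : ℂ) * Complex.I)‖ ^ 2)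
      ≤ 144 * E.card *
        circleAvg (fun t =>
          (ρ (∑ n ∈ E, b n * Complex.exp ((n : ℂ) * (t : ℂ) * Complex.I))) ^ 2) := by
  change circleAvg (fun t => ‖trigP E b t‖ ^ 2) ≤
    144 * E.card * circleAvg (fun t => (ρ (trigP E b t)) ^ 2)
  have hP := trigP_cont E b
  have hρ : Continuous ρ := by unfold ρ; fun_prop
  have hpi := Real.pi_pos
  unfold circleAvg
  rw [trigP_normSq]
  set N := ∑ n ∈ E, ‖b n‖ ^ 2 with hN
  have hN0 : 0 ≤ N := by positivity
  have hre0 : ∫ t in (0 : ℝ)..(2 * Real.pi), (trigP E b t).re = 0 := by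
    rw [re_int _ hP, trigP_int E hE]; simp
  have hre2 : ∫ t in (0 : ℝ)..(2 * Real.pi), (trigP E b t).re ^ 2 = Real.pi * N := by
    have h1 : ∀ t, (trigP E b t).re ^ 2 =
        (1 / 2) * (‖trigP E b t‖ ^ 2 + (trigP E b t * trigP E b t).re) := by
      intro t
      rw [← Complex.normSq_eq_norm_sq, Complex.normSq_apply, Complex.mul_re]; ring
    simp_rw [h1]
    rw [intervalIntegral.integral_const_mul, intervalIntegral.integral_add
      (Continuous.intervalIntegrable (by fun_prop) _ _)
      (Continuous.intervalIntegrable (by fun_prop) _ _), trigP_normSq,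
      re_int (fun t => trigP E b t * trigP E b t) (by fun_prop), trigP_sq E hE]
    simp; ring
  set J := ∫ t in (0 : ℝ)..(2 * Real.pi), (ρ (trigP E b t)) ^ 2 with hJ
  have hJ0 : 0 ≤ J := intervalIntegral.integral_nonneg (by positivity) (fun t _ => by positivity)
  have hL' : (1 : ℝ) ≤ E.card := by exact_mod_cast hL
  set L : ℝ := (E.card : ℝ) with hLdef
  have e1 : ∀ a : ℝ, 0 < a → 2 * Real.pi * N ≤ (1 + a) * J + 2 * Real.pi * (1 / a) := by
    intro a ha
    have := intervalIntegral.integral_mono_on (μ := volume) (a := 0) (b := 2 * Real.pi)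
      (f := fun t => ‖trigP E b t‖ ^ 2)
      (g := fun t => (1 + a) * ρ (trigP E b t) ^ 2 + 1 / a - 2 * (trigP E b t).re)
      (by positivity)
      (Continuous.intervalIntegrable (by fun_prop) _ _)
      (Continuous.intervalIntegrable (by fun_prop) _ _)
      (fun t _ => pt_one _ a ha)
    rw [trigP_normSq, intervalIntegral.integral_sub
      (Continuous.intervalIntegrable (by fun_prop) _ _)
      (Continuous.intervalIntegrable (by fun_prop) _ _), intervalIntegral.integral_add
      (Continuous.intervalIntegrable (by fun_prop) _ _)
      (Continuous.intervalIntegrable (by fun_prop) _ _),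
      intervalIntegral.integral_const_mul, intervalIntegral.integral_const_mul, hre0,
      intervalIntegral.integral_const] at this
    simpa using this
  have e2 : Real.pi * N ≤ 2 * J + (L * N) / 2 * (2 * Real.pi * N) := by
    have := intervalIntegral.integral_mono_on (μ := volume) (a := 0) (b := 2 * Real.pi)
      (f := fun t => (trigP E b t).re ^ 2)
      (g := fun t => 2 * ρ (trigP E b t) ^ 2 + (L * N) / 2 * ‖trigP E b t‖ ^ 2)
      (by positivity)
      (Continuous.intervalIntegrable (by fun_prop) _ _)
      (Continuous.intervalIntegrable (by fun_prop) _ _)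
      (fun t _ => pt_two _ _ (trigP_sup E b t))
    rw [hre2, intervalIntegral.integral_add
      (Continuous.intervalIntegrable (by fun_prop) _ _)
      (Continuous.intervalIntegrable (by fun_prop) _ _),
      intervalIntegral.integral_const_mul, intervalIntegral.integral_const_mul,
      trigP_normSq] at this
    exact this
  have main : 2 * Real.pi * N ≤ 144 * L * J := by
    have hLJ : J ≤ L * J := by nlinarith
    by_cases hs : L * N ≤ 1 / 2
    · have : (L * N) / 2 * (2 * Real.pi * N) ≤ (1 / 2) / 2 * (2 * Real.pi * N) := by gcongr
      nlinarith
    · push Not at hs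
      have hNpos : 0 < N := by
        by_contra h
        have : N = 0 := by linarith
        rw [this] at hs; norm_num at hs
      have h := e1 (2 / N) (by positivity)
      have h2 : 2 / N ≤ 4 * L := by
        rw [div_le_iff₀ hNpos]; linarith
      have h3 : (1 + 2 / N) * J ≤ (1 + 4 * L) * J := by gcongr
      have h4 : 1 / (2 / N) = N / 2 := by field_simp
      rw [h4] at h
      nlinarith
  calc 1 / (2 * Real.pi) * (2 * Real.pi * N) ≤ 1 / (2 * Real.pi) * (144 * L * J) := by gcongr
    _ = _ := by ring
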